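/- Let T : Matrix (Fin 4) (Fin 4) ℝ be symmetric (T.IsSymm) and suppose T satisfies the strengthened dominant energy condition: for every covector ξ : Fin 4 → ℝ with η₄(ξ,ξ) > 0, one has ∑ a, ∑ b, T a b * ξ a * ξ b ≥ 0, and either T = 0 or η₄(T.mulVec ξ, T.mulVec ξ) > 0. Then T satisfies the strict dominant energy condition: for every pair of covectors ξ, ζ : Fin 4 → ℝ with η₄(ξ,ξ) > 0, ξ 0 > 0, η₄(ζ,ζ) > 0, ζ 0 > 0, either T = 0 or ∑ a, ∑ b, T a b * ξ a * ζ b > 0. -/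

import Mathlib

/-- The Minkowski inner product on `ℝ⁴ = Fin 4 → ℝ` in inertial coordinates
(the inverse metric has the same components, so the same formula measures covectors). -/
def η₄ (u v : Fin 4 → ℝ) : ℝ :=
  u 0 * v 0 - u 1 * v 1 - u 2 * v 2 - u 3 * v 3

/-!
Fix a future-directed timelike covector `ζ` and put `v = T *ᵥ ζ`, which is timelike unless `T = 0`.
A timelike vector is future- or past-directed, and by Cauchy–Schwarz its pairing with any
future-directed timelike covector is positive or negative accordingly. Since `ζ` itself pairs
nonnegatively with `v`, the vector `v` is future-directed, so every future-directed timelike `ξ`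
pairs positively with it.
-/

open Matrix

section EnergyConditions

variable {n : ℕ} {R : Type*} [CommRing R] [LinearOrder R]

/-- Timelike (co)vectors of `(1 + n)`-dimensional Minkowski space with signature `(+, -, …, -)`;
the coordinate `0` is time. -/
def IsTimelike (u : Fin (n + 1) → R) : Prop :=
  ∑ i : Fin n, u i.succ ^ 2 < u 0 ^ 2

/-- Future-directed timelike (co)vectors, which normalize the co-orientation of the arguments of
the strict dominant energy condition. -/
def IsFutureTimelike (u : Fin (n + 1) → R) : Prop :=
  IsTimelike u ∧ 0 < u 0

/-- The strengthened dominant energy condition on a tensor `T^{ab}`, whose energy flux along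
`ξ` is taken to be the contraction with the second index. -/
def StrengthenedDEC (T : Matrix (Fin (n + 1)) (Fin (n + 1)) R) : Prop :=
  ∀ ξ, IsTimelike ξ → 0 ≤ ξ ⬝ᵥ T *ᵥ ξ ∧ (T = 0 ∨ IsTimelike (T *ᵥ ξ))

/-- The strict dominant energy condition on a tensor `T^{ab}`, with co-oriented covectors
normalized to be future-directed. -/
def StrictDEC (T : Matrix (Fin (n + 1)) (Fin (n + 1)) R) : Prop :=
  ∀ ξ ζ, IsFutureTimelike ξ → IsFutureTimelike ζ → T = 0 ∨ 0 < ξ ⬝ᵥ T *ᵥ ζ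

theorem IsTimelike.neg {u : Fin (n + 1) → R} (hu : IsTimelike u) : IsTimelike (-u) := by
  simpa only [IsTimelike, Pi.neg_apply, neg_sq] using hu

variable [IsStrictOrderedRing R] {u v ξ : Fin (n + 1) → R}

theorem IsTimelike.apply_zero_ne_zero (hu : IsTimelike u) : u 0 ≠ 0 := by
  have hpos : 0 < u 0 ^ 2 := (Finset.sum_nonneg fun i _ => sq_nonneg (u i.succ)).trans_lt hu
  exact (pow_ne_zero_iff two_ne_zero).mp hpos.ne'

theorem IsTimelike.abs_sum_mul_lt (hu : IsTimelike u) (hv : IsTimelike v) :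
    |∑ i : Fin n, u i.succ * v i.succ| < |u 0 * v 0| := by
  refine sq_lt_sq.mp ?_
  calc (∑ i : Fin n, u i.succ * v i.succ) ^ 2
      ≤ (∑ i : Fin n, u i.succ ^ 2) * ∑ i : Fin n, v i.succ ^ 2 :=
        Finset.sum_mul_sq_le_sq_mul_sq _ _ _
    _ < u 0 ^ 2 * v 0 ^ 2 :=
        mul_lt_mul'' hu hv (Finset.sum_nonneg fun _ _ => sq_nonneg _)
          (Finset.sum_nonneg fun _ _ => sq_nonneg _)
    _ = (u 0 * v 0) ^ 2 := (mul_pow _ _ _).symm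

theorem IsFutureTimelike.dotProduct_pos (hu : IsFutureTimelike u) (hv : IsFutureTimelike v) :
    0 < u ⬝ᵥ v := by
  have hlt := hu.1.abs_sum_mul_lt hv.1
  rw [abs_of_pos (mul_pos hu.2 hv.2)] at hlt
  rw [dotProduct, Fin.sum_univ_succ]
  exact neg_lt_iff_pos_add'.mp (abs_lt.mp hlt).1

theorem IsTimelike.isFutureTimelike_of_dotProduct_nonneg (hv : IsTimelike v)
    (hξ : IsFutureTimelike ξ) (h : 0 ≤ ξ ⬝ᵥ v) : IsFutureTimelike v := by
  refine ⟨hv, hv.apply_zero_ne_zero.lt_or_gt.resolve_left fun hneg => ?_⟩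
  have hpast : IsFutureTimelike (-v) := ⟨hv.neg, neg_pos.mpr hneg⟩
  have hpos : 0 < ξ ⬝ᵥ -v := hξ.dotProduct_pos hpast
  rw [dotProduct_neg] at hpos
  exact h.not_gt (neg_pos.mp hpos)

theorem strengthened_dec_implies_strict_dec_general {T : Matrix (Fin (n + 1)) (Fin (n + 1)) R}
    (hT : StrengthenedDEC T) : StrictDEC T := by
  intro ξ ζ hξ hζ
  obtain ⟨hnonneg, hzero | htimelike⟩ := hT ζ hζ.1
  · exact Or.inl hzero
  · have hfuture : IsFutureTimelike (T *ᵥ ζ) :=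
      htimelike.isFutureTimelike_of_dotProduct_nonneg hζ hnonneg
    exact Or.inr (hξ.dotProduct_pos hfuture)

end EnergyConditions

theorem sum_sum_mul_mul_eq_dotProduct_mulVec {m n R : Type*} [Fintype m] [Fintype n]
    [CommSemiring R] (A : Matrix m n R) (x : m → R) (y : n → R) :
    ∑ a, ∑ b, A a b * x a * y b = x ⬝ᵥ A *ᵥ y := by
  simp only [dotProduct, mulVec, Finset.mul_sum, mul_left_comm, mul_assoc]

theorem η₄_self_pos_iff_isTimelike (u : Fin 4 → ℝ) : 0 < η₄ u u ↔ IsTimelike u := by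
  have hη : η₄ u u = u 0 ^ 2 - ∑ i : Fin 3, u i.succ ^ 2 := by
    simp only [η₄, Fin.sum_univ_three, Fin.succ_zero_eq_one, Fin.succ_one_eq_two, Fin.reduceSucc]
    ring
  rw [hη, sub_pos, IsTimelike]

/-- The strengthened dominant energy condition implies the strict dominant energy
condition. -/
theorem strengthened_dec_implies_strict_dec
    (T : Matrix (Fin 4) (Fin 4) ℝ) (hT : T.IsSymm)
    (hsdec : ∀ ξ : Fin 4 → ℝ, η₄ ξ ξ > 0 →
        (∑ a, ∑ b, T a b * ξ a * ξ b ≥ 0) ∧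
        (T = 0 ∨ η₄ (T.mulVec ξ) (T.mulVec ξ) > 0)) :
    ∀ ξ ζ : Fin 4 → ℝ, η₄ ξ ξ > 0 → ξ 0 > 0 → η₄ ζ ζ > 0 → ζ 0 > 0 →
        (T = 0 ∨ ∑ a, ∑ b, T a b * ξ a * ζ b > 0) := by
  simp only [gt_iff_lt, ge_iff_le, η₄_self_pos_iff_isTimelike,
    sum_sum_mul_mul_eq_dotProduct_mulVec] at hsdec ⊢
  exact fun ξ ζ hξ hξ₀ hζ hζ₀ =>
    strengthened_dec_implies_strict_dec_general hsdec ξ ζ ⟨hξ, hξ₀⟩ ⟨hζ, hζ₀⟩
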